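/- Let a contractive local IFS on a compact metric space X have local attractor A ≠ ∅, and let λ := max_j λ_j ∈ [0,1). For a compact set K ⊆ X and b : ℕ → Fin n, define W_b^K(1) = f_{b(0)}(K ∩ X_{b(0)}) and W_b^K(k+1) = f_{b(0)}(W_{σb}^K(k) ∩ X_{b(0)}), where σb := (j ↦ b(j+1)); define the essential part ess_k(A_0) := ⋃{W_b^{A_0}(k) : b such that W_b^{A}(k) ≠ ∅}. Then for every compact set A_0 with A ⊆ A_0 and every k ≥ 1: hausdorffDist(ess_k(A_0), A) ≤ λ^k · diam(X). -/

import Mathlib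

/-- The relative cylinder sets of a local IFS: `relCylinder f Xs K k b` is the set
`W_b^K(k+1)`, where `W_b^K(1) = f_{b 0}(K ∩ X_{b 0})` and
`W_b^K(k+1) = f_{b 0}(W_{σb}^K(k) ∩ X_{b 0})`. -/
def relCylinder {X : Type*} {n : ℕ} (f : Fin n → X → X) (Xs : Fin n → Set X)
    (K : Set X) : ℕ → (ℕ → Fin n) → Set X
  | 0, b => f (b 0) '' (K ∩ Xs (b 0))
  | k + 1, b => f (b 0) '' (relCylinder f Xs K k (fun j => b (j + 1)) ∩ Xs (b 0))

/-- The essential part of `F^[k+1] A₀`: the union of those cylinders of `A₀` of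
generation `k+1` whose corresponding cylinder of the attractor `A` is nonempty. -/
def essentialPart {X : Type*} {n : ℕ} (f : Fin n → X → X) (Xs : Fin n → Set X)
    (A A₀ : Set X) (k : ℕ) : Set X :=
  ⋃ b ∈ {b : ℕ → Fin n | (relCylinder f Xs A k b).Nonempty}, relCylinder f Xs A₀ k b

/-!
The local attractor `A` is the greatest fixed point of the local Hutchinson–Barnsley operator `F`
(Knaster–Tarski). Since `F^k(K)` is the union of the generation-`k` cylinders of `K`, the cylinders
of `A` cover `A` and stay inside it; as `A ⊆ A₀`, this puts `A` inside the essential part of `A₀`.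
Conversely, a cylinder of `A₀` that contributes to the essential part contains the corresponding
nonempty cylinder of `A`, hence a point of `A`, and its diameter has been contracted `k` times.
-/

open Set Function Metric
open scoped NNReal ENNReal

theorem isFixedPt_sSup_fixedPoints {α : Type*} [CompleteLattice α] (f : α →o α) :
    IsFixedPt f (sSup (fixedPoints f)) := by
  rw [f.isGreatest_gfp.isLUB.sSup_eq]
  exact f.isFixedPt_gfp

theorem ediam_image_le_of_lipschitzOnWith {X Y : Type*} [PseudoEMetricSpace X]
    [PseudoEMetricSpace Y] {L : ℝ≥0} {f : X → Y} {s : Set X} (hf : LipschitzOnWith L f s) :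
    ediam (f '' s) ≤ L * ediam s :=
  ediam_image_le_iff.2 fun _ hx _ hy => hf.edist_le_mul_of_le hx hy (edist_le_ediam_of_mem hx hy)

/-- The local Hutchinson–Barnsley operator `B ↦ ⋃ j, f j '' (B ∩ Xs j)` of a local IFS, bundled as a
monotone map so that the Knaster–Tarski theory of `OrderHom` applies to it. -/
def localHutchinson {X ι : Type*} (f : ι → X → X) (Xs : ι → Set X) : Set X →o Set X where
  toFun B := ⋃ j, f j '' (B ∩ Xs j)
  monotone' _ _ h := iUnion_mono fun _ => image_mono (inter_subset_inter_left _ h)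

section Cylinder

variable {X : Type*} {n : ℕ} {f : Fin n → X → X} {Xs : Fin n → Set X}

theorem relCylinder_mono {K K' : Set X} (h : K ⊆ K') (k : ℕ) (b : ℕ → Fin n) :
    relCylinder f Xs K k b ⊆ relCylinder f Xs K' k b := by
  induction k generalizing b with
  | zero => exact image_mono (inter_subset_inter_left _ h)
  | succ k ih => exact image_mono (inter_subset_inter_left _ (ih _))

theorem surjective_head_tail (α : Type*) :
    Surjective fun b : ℕ → α => (b 0, fun j => b (j + 1)) :=
  fun ⟨a, b⟩ => ⟨fun i => Nat.casesOn i a b, rfl⟩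

theorem iUnion_relCylinder (K : Set X) (k : ℕ) :
    ⋃ b, relCylinder f Xs K k b = (localHutchinson f Xs)^[k + 1] K := by
  induction k with
  | zero =>
    have head_surjective : Surjective fun b : ℕ → Fin n => b 0 := fun j => ⟨fun _ => j, rfl⟩
    exact head_surjective.iUnion_comp fun j => f j '' (K ∩ Xs j)
  | succ k ih =>
    calc ⋃ b, relCylinder f Xs K (k + 1) b
        = ⋃ p : Fin n × (ℕ → Fin n), f p.1 '' (relCylinder f Xs K k p.2 ∩ Xs p.1) :=
          (surjective_head_tail (Fin n)).iUnion_comp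
            fun p => f p.1 '' (relCylinder f Xs K k p.2 ∩ Xs p.1)
      _ = ⋃ j, f j '' ((⋃ b, relCylinder f Xs K k b) ∩ Xs j) := by
          simp only [iUnion_prod', iUnion_inter, image_iUnion]
      _ = localHutchinson f Xs ((localHutchinson f Xs)^[k + 1] K) := by rw [ih]; rfl
      _ = (localHutchinson f Xs)^[k + 1 + 1] K := (iterate_succ_apply' _ _ _).symm

theorem iUnion_relCylinder_of_isFixedPt {A : Set X} (hA : IsFixedPt (localHutchinson f Xs) A)
    (k : ℕ) : ⋃ b, relCylinder f Xs A k b = A :=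
  (iUnion_relCylinder A k).trans (hA.iterate (k + 1))

theorem subset_essentialPart {A A₀ : Set X} (hA : IsFixedPt (localHutchinson f Xs) A)
    (hsub : A ⊆ A₀) (k : ℕ) : A ⊆ essentialPart f Xs A A₀ k := by
  intro x hx
  rw [← iUnion_relCylinder_of_isFixedPt hA k] at hx
  obtain ⟨b, hxb⟩ := mem_iUnion.1 hx
  exact mem_iUnion₂.2 ⟨b, ⟨x, hxb⟩, relCylinder_mono hsub k b hxb⟩

end Cylinder

section Contraction

variable {X : Type*} {n : ℕ} {f : Fin n → X → X} {Xs : Fin n → Set X} {L : ℝ≥0}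

theorem ediam_relCylinder_le [PseudoEMetricSpace X] (hf : ∀ j, LipschitzOnWith L (f j) (Xs j))
    (K : Set X) (k : ℕ) (b : ℕ → Fin n) :
    ediam (relCylinder f Xs K k b) ≤ L ^ (k + 1) * ediam K := by
  have ediam_image_inter_le (S : Set X) (j : Fin n) :
      ediam (f j '' (S ∩ Xs j)) ≤ L * ediam S :=
    calc ediam (f j '' (S ∩ Xs j)) ≤ L * ediam (S ∩ Xs j) :=
          ediam_image_le_of_lipschitzOnWith ((hf j).mono inter_subset_right)
      _ ≤ L * ediam S := by gcongr; exact inter_subset_left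
  induction k generalizing b with
  | zero => simpa only [relCylinder, zero_add, pow_one] using ediam_image_inter_le K (b 0)
  | succ k ih =>
    calc ediam (relCylinder f Xs K (k + 1) b)
        ≤ L * ediam (relCylinder f Xs K k fun j => b (j + 1)) := ediam_image_inter_le _ (b 0)
      _ ≤ L * (L ^ (k + 1) * ediam K) := by gcongr; exact ih _
      _ = L ^ (k + 1 + 1) * ediam K := by rw [pow_succ' _ (k + 1), mul_assoc]

theorem hausdorffEDist_essentialPart_le [PseudoEMetricSpace X]
    (hf : ∀ j, LipschitzOnWith L (f j) (Xs j)) {A A₀ : Set X}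
    (hA : IsFixedPt (localHutchinson f Xs) A) (hsub : A ⊆ A₀) (k : ℕ) :
    hausdorffEDist (essentialPart f Xs A A₀ k) A ≤ L ^ (k + 1) * ediam A₀ := by
  refine hausdorffEDist_le_of_mem_edist (fun x hx => ?_)
    fun x hx => ⟨x, subset_essentialPart hA hsub k hx, by simp only [edist_self, zero_le]⟩
  obtain ⟨b, ⟨y, hyb⟩, hxb⟩ := mem_iUnion₂.1 hx
  have hyA : y ∈ A := iUnion_relCylinder_of_isFixedPt hA k ▸ mem_iUnion_of_mem b hyb
  have hyb₀ : y ∈ relCylinder f Xs A₀ k b := relCylinder_mono hsub k b hyb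
  exact ⟨y, hyA, (edist_le_ediam_of_mem hxb hyb₀).trans (ediam_relCylinder_le hf A₀ k b)⟩

theorem essentialPart_hausdorffDist_le_general [PseudoMetricSpace X]
    (hf : ∀ j, LipschitzOnWith L (f j) (Xs j)) {A A₀ : Set X}
    (hA : IsFixedPt (localHutchinson f Xs) A) (hA₀ : Bornology.IsBounded A₀) (hsub : A ⊆ A₀)
    (k : ℕ) :
    hausdorffDist (essentialPart f Xs A A₀ k) A ≤ L ^ (k + 1) * diam A₀ := by
  have bound_ne_top : (L : ℝ≥0∞) ^ (k + 1) * ediam A₀ ≠ ⊤ :=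
    ENNReal.mul_ne_top (by finiteness) hA₀.ediam_ne_top
  simpa [hausdorffDist, diam] using
    ENNReal.toReal_mono bound_ne_top (hausdorffEDist_essentialPart_le hf hA hsub k)

end Contraction

/-- For a contractive local IFS with nonempty local attractor `A`
and maximal contraction constant `L = max_j lam j < 1`: for every compact `A₀ ⊇ A`
and every generation `k ≥ 1` (encoded by the index `k + 1`), the essential part of
`F^[k+1] A₀` is `L^(k+1) · diam X`-close to `A` in the Hausdorff distance. -/
theorem essentialPart_hausdorffDist_le {X : Type*} [MetricSpace X] [CompactSpace X]
    {n : ℕ} (hn : 0 < n)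
    (Xs : Fin n → Set X) (hXs : ∀ j, IsClosed (Xs j))
    (f : Fin n → X → X)
    (lam : Fin n → ℝ) (hlam0 : ∀ j, 0 ≤ lam j) (hlam1 : ∀ j, lam j < 1)
    (hcontr : ∀ j, ∀ x ∈ Xs j, ∀ y ∈ Xs j, dist (f j x) (f j y) ≤ lam j * dist x y)
    (L : ℝ) (hL : ∀ j, lam j ≤ L) (hL1 : L < 1)
    (hLmax : ∃ j, lam j = L)  -- `L` is the maximum of the `lam j`
    (F : Set X → Set X) (hF : ∀ B, F B = ⋃ j, f j '' (B ∩ Xs j))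
    (A : Set X) (hA : A = ⋃₀ {B : Set X | F B = B}) (hAne : A.Nonempty)
    (A₀ : Set X) (hA₀ : IsCompact A₀) (hsub : A ⊆ A₀) (k : ℕ) :
    Metric.hausdorffDist (essentialPart f Xs A A₀ k) A
      ≤ L ^ (k + 1) * Metric.diam (Set.univ : Set X) := by
  lift L to ℝ≥0 using (hlam0 ⟨0, hn⟩).trans (hL _)
  obtain rfl : F = localHutchinson f Xs := funext hF
  have hf (j : Fin n) : LipschitzOnWith L (f j) (Xs j) := .of_dist_le_mul fun x hx y hy =>
    (hcontr j x hx y hy).trans (by gcongr; exact hL j)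
  have hfix : IsFixedPt (localHutchinson f Xs) A := hA ▸ isFixedPt_sSup_fixedPoints _
  calc hausdorffDist (essentialPart f Xs A A₀ k) A
      ≤ L ^ (k + 1) * diam A₀ :=
        essentialPart_hausdorffDist_le_general hf hfix hA₀.isBounded hsub k
    _ ≤ L ^ (k + 1) * diam univ := by
        gcongr
        exact diam_mono (subset_univ A₀) isCompact_univ.isBounded
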